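/- arXiv:2406.03759 — 3 statements merged into one kernel-verified Lean document; each statement's English description precedes it below -/
import Mathlib

section
/- Let $A$ be a unique factorization domain and let $I$ be a nonzero ideal of $A$. Then the following three statements are equivalent: (1) $I$ is not contained in any prime ideal of $A$ of height $1$; (2) there exist elements $f, g \in I$ such that $f$ and $g$ are relatively prime; (3) for every nonzero element $f \in A$ there exists $g \in I$ such that $f$ and $g$ are relatively prime. -/
/-!
In a unique factorization domain the height one primes are exactly the ideals `(p)` with `p` a
prime element. A nonzero `f` has only finitely many prime factors up to associates, so if `I` lies
in none of the ideals they generate, prime avoidance yields an element of `I` outside all of them,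
and such an element is relatively prime to `f`.
-/

/-- A prime ideal `P` of `A` has height one if its height, as an element of the
prime spectrum of `A`, equals `1`. -/
def Ideal.HeightOne {A : Type*} [CommRing A] (P : Ideal A) (hP : P.IsPrime) : Prop :=
  Order.height (⟨P, hP⟩ : PrimeSpectrum A) = 1

theorem eq_bot_of_lt_span_singleton_of_prime {A : Type*} [CommRing A] [WfDvdMonoid A] {p : A}
    (hp : Prime p) {Q : Ideal A} (hQ : Q.IsPrime) (hQp : Q < Ideal.span {p}) : Q = ⊥ := by
  by_contra hQ_ne
  obtain ⟨x, hxQ, hx⟩ := Submodule.exists_mem_ne_zero_of_ne_bot hQ_ne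
  obtain ⟨n, y, hpy, rfl⟩ := WfDvdMonoid.max_power_factor' hx hp.not_isUnit
  have hpQ : p ∉ Q := fun h => hQp.not_ge ((Ideal.span_singleton_le_iff_mem Q).mpr h)
  have hyQ : y ∈ Q :=
    (hQ.mem_or_mem hxQ).resolve_left fun h => hpQ (hQ.mem_of_pow_mem n h)
  exact hpy (Ideal.mem_span_singleton.mp (hQp.le hyQ))

theorem height_span_singleton_eq_one_of_prime {A : Type*} [CommRing A] [IsDomain A]
    [WfDvdMonoid A] {p : A} (hp : Prime p) : (Ideal.span {p}).height = 1 := by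
  have : (Ideal.span {p}).IsPrime := (Ideal.span_singleton_prime hp.ne_zero).mpr hp
  apply le_antisymm
  · refine Ideal.height_le_iff (n := 1) |>.mpr fun Q hQ hQp => ?_
    rw [eq_bot_of_lt_span_singleton_of_prime hp hQ hQp, Ideal.height_bot]
    exact zero_lt_one
  · exact Ideal.one_le_height_span_singleton_of_mem_nonZeroDivisors
      (mem_nonZeroDivisors_of_ne_zero hp.ne_zero)

theorem heightOne_iff_height_eq_one {A : Type*} [CommRing A] {P : Ideal A} (hP : P.IsPrime) :
    P.HeightOne hP ↔ P.height = 1 := by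
  rw [Ideal.HeightOne, ← PrimeSpectrum.height_eq_orderHeight]

theorem heightOne_iff_exists_prime_eq_span_singleton {A : Type*} [CommRing A] [IsDomain A]
    [UniqueFactorizationMonoid A] {P : Ideal A} (hP : P.IsPrime) :
    P.HeightOne hP ↔ ∃ p, Prime p ∧ P = Ideal.span {p} := by
  rw [heightOne_iff_height_eq_one]
  constructor
  · intro hP_height
    obtain ⟨p, hpP, hp⟩ := hP.exists_mem_prime_of_ne_bot (P.ne_bot_of_height_eq_one hP_height)
    exact ⟨p, hp, P.eq_span_singleton_of_height_eq_one hP_height hpP hp⟩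
  · rintro ⟨p, hp, rfl⟩
    exact height_span_singleton_eq_one_of_prime hp

theorem forall_heightOne_not_le_iff_forall_prime_not_le_span_singleton {A : Type*} [CommRing A]
    [IsDomain A] [UniqueFactorizationMonoid A] {I : Ideal A} :
    (∀ (P : Ideal A) (hP : P.IsPrime), P.HeightOne hP → ¬ I ≤ P) ↔
      ∀ p : A, Prime p → ¬ I ≤ Ideal.span {p} := by
  constructor
  · intro h p hp
    have hP : (Ideal.span {p}).IsPrime := (Ideal.span_singleton_prime hp.ne_zero).mpr hp
    exact h _ hP ((heightOne_iff_exists_prime_eq_span_singleton hP).mpr ⟨p, hp, rfl⟩)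
  · intro h P hP hP_one
    obtain ⟨p, hp, rfl⟩ := (heightOne_iff_exists_prime_eq_span_singleton hP).mp hP_one
    exact h p hp

theorem not_le_span_singleton_of_isRelPrime {A : Type*} [CommSemiring A] {f g p : A} {I : Ideal A}
    (hfg : IsRelPrime f g) (hf : f ∈ I) (hg : g ∈ I) (hp : ¬ IsUnit p) :
    ¬ I ≤ Ideal.span {p} := fun hIp =>
  hp (hfg (Ideal.mem_span_singleton.mp (hIp hf)) (Ideal.mem_span_singleton.mp (hIp hg)))

theorem exists_mem_isRelPrime_of_forall_prime_dvd_not_le {A : Type*} [CommRing A]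
    [UniqueFactorizationMonoid A] {I : Ideal A} {f : A} (hf : f ≠ 0)
    (hI : ∀ p, Prime p → p ∣ f → ¬ I ≤ Ideal.span {p}) : ∃ g ∈ I, IsRelPrime f g := by
  let S : Set A := {p | p ∈ UniqueFactorizationMonoid.factors f}
  have hS_prime : ∀ p ∈ S, Prime p := UniqueFactorizationMonoid.prime_of_factor
  have hS_span_prime : ∀ p ∈ S, (Ideal.span {p}).IsPrime := fun p hp =>
    (Ideal.span_singleton_prime (hS_prime p hp).ne_zero).mpr (hS_prime p hp)
  have hI_not_subset : ¬ (I : Set A) ⊆ ⋃ p ∈ S, (Ideal.span {p} : Ideal A) := by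
    rw [Ideal.subset_union_prime_finite (Multiset.finite_toSet _) 0 0
      fun p hp _ _ => hS_span_prime p hp]
    rintro ⟨p, hp, hIp⟩
    exact hI p (hS_prime p hp) (UniqueFactorizationMonoid.dvd_of_mem_factors hp) hIp
  obtain ⟨g, hgI, hgS⟩ := Set.not_subset.mp hI_not_subset
  refine ⟨g, hgI, (UniqueFactorizationMonoid.isRelPrime_iff_no_prime_factors hf).mpr ?_⟩
  intro q hqf hqg hq
  obtain ⟨p, hpS, hqp⟩ :=
    UniqueFactorizationMonoid.exists_mem_factors_of_dvd hf hq.irreducible hqf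
  exact hgS (Set.mem_biUnion hpS (Ideal.mem_span_singleton.mpr (hqp.symm.dvd.trans hqg)))

/-- Let `A` be a UFD and `I` a nonzero ideal of `A`. The following are equivalent:
(1) `I` is not contained in any height one prime ideal of `A`;
(2) there are relatively prime elements `f, g ∈ I`;
(3) for every nonzero `f ∈ A` there is `g ∈ I` relatively prime to `f`. -/
theorem ufd_ideal_not_le_height_one_prime_tfae
    {A : Type*} [CommRing A] [IsDomain A] [UniqueFactorizationMonoid A]
    (I : Ideal A) (hI : I ≠ ⊥) :
    List.TFAE
      [∀ (P : Ideal A) (hP : P.IsPrime), P.HeightOne hP → ¬ I ≤ P,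
       ∃ f ∈ I, ∃ g ∈ I, IsRelPrime f g,
       ∀ f : A, f ≠ 0 → ∃ g ∈ I, IsRelPrime f g] := by
  rw [forall_heightOne_not_le_iff_forall_prime_not_le_span_singleton]
  tfae_have 1 → 3 := fun h f hf =>
    exists_mem_isRelPrime_of_forall_prime_dvd_not_le hf fun p hp _ => h p hp
  tfae_have 3 → 2 := fun h => by
    obtain ⟨f, hf, hf_ne⟩ := Submodule.exists_mem_ne_zero_of_ne_bot hI
    exact ⟨f, hf, h f hf_ne⟩
  tfae_have 2 → 1 := fun ⟨_, hf, _, hg, hfg⟩ _ hp =>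
    not_le_span_singleton_of_isRelPrime hfg hf hg hp.not_isUnit
  tfae_finish
end

section
/- Let $R$ be a Noetherian unique factorization domain and let $I$ be a nonzero ideal of $R$. If the $R$-module $R/I$ has no nonzero pseudo-null $R$-submodule, then $I$ is a principal ideal. -/
/-- A module `N` over a commutative Noetherian ring `R` is pseudo-null if its
annihilator ideal is not contained in any height one prime ideal of `R`. -/
def Module.IsPseudoNull (R : Type*) [CommRing R] (N : Type*) [AddCommGroup N]
    [Module R N] : Prop :=
  ∀ (P : Ideal R) (hP : P.IsPrime), P.HeightOne hP → ¬ Module.annihilator R N ≤ P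

/-!
Dividing a nonzero ideal `I` by common factors of its elements as long as possible gives
`I = (d) J`, where the elements of `J` have no common nonunit factor. Height one primes of a unique
factorization domain are principal, so `J` lies in none of them. As `J` annihilates the submodule
`(d) / I` of `R / I`, this submodule is pseudo-null, hence zero, and `I = (d)`.
-/

/-- An ideal is primitive if no nonunit divides all of its elements (compare
`Polynomial.IsPrimitive`). It is what remains of an ideal after removing a largest principal
factor. -/
def IsPrimitiveIdeal {R : Type*} [CommSemiring R] (J : Ideal R) : Prop :=
  ∀ r : R, J ≤ Ideal.span {r} → IsUnit r

theorem span_singleton_dvd_iff_le {R : Type*} [CommSemiring R] {I : Ideal R} {p : R} :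
    Ideal.span {p} ∣ I ↔ I ≤ Ideal.span {p} := by
  refine ⟨Ideal.le_of_dvd, fun hIp => ⟨I.colon {p}, ?_⟩⟩
  refine le_antisymm (fun x hx => ?_) (Ideal.span_singleton_mul_le_iff.mpr fun y hy => ?_)
  · obtain ⟨y, rfl⟩ := Ideal.mem_span_singleton.mp (hIp hx)
    refine Ideal.mem_span_singleton_mul.mpr ⟨y, Submodule.mem_colon_singleton.mpr ?_, rfl⟩
    rwa [smul_eq_mul, mul_comm]
  · rw [mul_comm]
    exact Submodule.mem_colon_singleton.mp hy

theorem exists_eq_span_singleton_mul_isPrimitiveIdeal {R : Type*} [CommSemiring R] [WfDvdMonoid R]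
    (I : Ideal R) :
    ∃ (d : R) (J : Ideal R), I = Ideal.span {d} * J ∧ IsPrimitiveIdeal J := by
  rcases eq_or_ne I ⊥ with rfl | hI
  · exact ⟨0, ⊤, by simp, fun r hr => Ideal.span_singleton_eq_top.mp (top_le_iff.mp hr)⟩
  obtain ⟨a, haI, ha⟩ := Submodule.exists_mem_ne_zero_of_ne_bot hI
  clear hI
  induction a using (wellFounded_dvdNotUnit (α := R)).induction generalizing I with
  | _ a ih =>
  by_cases hprim : IsPrimitiveIdeal I
  · exact ⟨1, I, by simp, hprim⟩
  simp only [IsPrimitiveIdeal, not_forall] at hprim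
  obtain ⟨p, hIp, hp⟩ := hprim
  obtain ⟨I', rfl⟩ := span_singleton_dvd_iff_le.mpr hIp
  obtain ⟨b, hb, rfl⟩ := Ideal.mem_span_singleton_mul.mp haI
  have hb0 : b ≠ 0 := right_ne_zero_of_mul ha
  obtain ⟨d, J, rfl, hJ⟩ := ih b ⟨hb0, p, hp, mul_comm p b⟩ I' hb hb0
  exact ⟨p * d, J, by rw [← mul_assoc, Ideal.span_singleton_mul_span_singleton], hJ⟩

theorem le_annihilator_map_mkQ_iff_smul_le {R M : Type*} [CommRing R] [AddCommGroup M]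
    [Module R M] {J : Ideal R} {N P : Submodule R M} :
    J ≤ (P.map N.mkQ).annihilator ↔ J • P ≤ N := by
  rw [Submodule.annihilator_map_mkQ_eq_colon, Submodule.smul_le]
  exact forall₂_congr fun _ _ => Submodule.mem_colon

theorem IsPrimitiveIdeal.isPseudoNull_of_le_annihilator {R N : Type*} [CommRing R] [IsDomain R]
    [UniqueFactorizationMonoid R] [AddCommGroup N] [Module R N] {J : Ideal R}
    (hJ : IsPrimitiveIdeal J) (hJN : J ≤ Module.annihilator R N) :
    Module.IsPseudoNull R N := by
  intro P hP hP1 hNP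
  have hheight : P.height = 1 := (PrimeSpectrum.height_eq_orderHeight ⟨P, hP⟩).trans hP1
  obtain ⟨p, rfl⟩ := UniqueFactorizationMonoid.isPrincipal_of_height_eq_one hheight
  exact hP.ne_top (Ideal.span_singleton_eq_top.mpr (hJ p (hJN.trans hNP)))

theorem isPrincipal_of_no_pseudoNull_submodule_general {R : Type*} [CommRing R] [IsDomain R]
    [UniqueFactorizationMonoid R] (I : Ideal R)
    (h : ∀ N : Submodule R (R ⧸ I), Module.IsPseudoNull R N → N = ⊥) :
    I.IsPrincipal := by
  obtain ⟨d, J, hI, hJ⟩ := exists_eq_span_singleton_mul_isPrimitiveIdeal I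
  have hann : J ≤ (Submodule.map I.mkQ (Ideal.span {d})).annihilator :=
    le_annihilator_map_mkQ_iff_smul_le.mpr (by rw [smul_eq_mul, mul_comm, hI])
  have hbot := h _ (hJ.isPseudoNull_of_le_annihilator hann)
  rw [← LinearMap.le_ker_iff_map, Submodule.ker_mkQ] at hbot
  exact ⟨d, le_antisymm (hI.le.trans Ideal.mul_le_left) hbot⟩

/-- Let `R` be a Noetherian UFD and `I` a nonzero ideal of `R`. If `R/I` has no nonzero
pseudo-null `R`-submodule, then `I` is principal. -/
theorem isPrincipal_of_no_pseudoNull_submodule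
    {R : Type*} [CommRing R] [IsDomain R] [IsNoetherianRing R]
    [UniqueFactorizationMonoid R] (I : Ideal R) (hI : I ≠ ⊥)
    (h : ∀ N : Submodule R (R ⧸ I), Module.IsPseudoNull R N → N = ⊥) :
    I.IsPrincipal :=
  isPrincipal_of_no_pseudoNull_submodule_general I h
end

section
/- Let $p$ be a prime number and let $\Lambda = \mathbb{Z}_p[[T]]$ be the ring of formal power series in one variable over the ring of $p$-adic integers. Let $M$ be a finitely generated torsion $\Lambda$-module. Then $M$ has no nontrivial finite $\Lambda$-submodule if and only if there exist a positive integer $r$, an injective $\Lambda$-linear map $\varphi : \Lambda^{\oplus r} \to \Lambda^{\oplus r}$, and a surjective $\Lambda$-linear map $\pi : \Lambda^{\oplus r} \to M$ whose kernel equals the image of $\varphi$ (i.e., there is an exact sequence $0 \to \Lambda^{\oplus r} \to \Lambda^{\oplus r} \to M \to 0$). -/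
/-!
Let `R` be a Noetherian local ring whose maximal ideal is generated by a regular sequence `x, y`,
such as `ℤ_p⟦T⟧` with `T, p`, and let `K` be the kernel of a surjection `π : Rⁿ → M`. An element
`π v` is killed by `x` and `y` exactly when `x • v` and `y • v` lie in `K`, and this pair has the
form `x • u, y • u` with `u ∈ K` only if `v ∈ K`. So `x, y` is a regular sequence on `K` if and
only if `M` has no nonzero element killed by the maximal ideal, that is, no nonzero submodule of
finite length. By Nakayama's lemma, applied successively to the elements of the sequence, regularity
on `K` says that `K` is free. When `M` is torsion, `K` has rank `n`.
-/

open IsLocalRing RingTheory.Sequence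

section FiniteLength

variable {R M : Type*} [CommRing R] [IsLocalRing R] [AddCommGroup M] [Module R M]

lemma nonempty_linearEquiv_residueField_of_isSimpleModule [IsSimpleModule R M] :
    Nonempty (M ≃ₗ[R] ResidueField R) := by
  obtain ⟨I, hI, ⟨e⟩⟩ := isSimpleModule_iff_quot_maximal.mp ‹IsSimpleModule R M›
  obtain rfl := eq_maximalIdeal hI
  exact ⟨e⟩

lemma exists_ne_zero_maximalIdeal_le_torsionOf [Nontrivial M] (hM : IsFiniteLength R M) :
    ∃ m : M, m ≠ 0 ∧ maximalIdeal R ≤ Ideal.torsionOf R M m := by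
  have := (isFiniteLength_iff_isNoetherian_isArtinian.mp hM).2
  obtain ⟨S, hS, -⟩ :=
    (eq_bot_or_exists_atom_le (⊤ : Submodule R M)).resolve_left top_ne_bot
  have : IsSimpleModule R S := isSimpleModule_iff_isAtom.mpr hS
  obtain ⟨s, hs⟩ := @exists_ne S (IsSimpleModule.nontrivial R S) 0
  rw [← eq_maximalIdeal (IsSimpleModule.annihilator_isMaximal (M := S))]
  exact ⟨s, Subtype.coe_ne_coe.mpr hs,
    fun a ha => congrArg Subtype.val (Module.mem_annihilator.mp ha s)⟩

lemma isFiniteLength_span_singleton {m : M} (hm : maximalIdeal R ≤ Ideal.torsionOf R M m) :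
    IsFiniteLength R (Submodule.span R {m}) := by
  have : IsSimpleModule R (R ⧸ maximalIdeal R) :=
    isSimpleModule_iff_isCoatom.mpr (maximalIdeal.isMaximal R).out
  have : IsFiniteLength R (R ⧸ maximalIdeal R) :=
    isFiniteLength_iff_isNoetherian_isArtinian.mpr ⟨inferInstance, inferInstance⟩
  exact (Ideal.quotTorsionOfEquivSpanSingleton R M m).isFiniteLength
    (this.of_surjective (Submodule.factor_surjective hm))

lemma forall_isFiniteLength_eq_bot_iff :
    (∀ N : Submodule R M, IsFiniteLength R N → N = ⊥) ↔
      ∀ m : M, maximalIdeal R ≤ Ideal.torsionOf R M m → m = 0 := by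
  refine ⟨fun h m hm =>
    Submodule.span_singleton_eq_bot.mp (h _ (isFiniteLength_span_singleton hm)), fun h N hN => ?_⟩
  by_contra hbot
  have := Submodule.nontrivial_iff_ne_bot.mpr hbot
  obtain ⟨m, hm0, hm⟩ := exists_ne_zero_maximalIdeal_le_torsionOf hN
  exact hm0 (Subtype.ext (h m fun a ha => congrArg Subtype.val (hm ha)))

lemma finite_iff_isFiniteLength [Finite (ResidueField R)] : Finite M ↔ IsFiniteLength R M := by
  refine ⟨fun _ => isFiniteLength_iff_isNoetherian_isArtinian.mpr ⟨inferInstance, inferInstance⟩,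
    fun h => ?_⟩
  induction h with
  | of_subsingleton => infer_instance
  | @of_simple_quotient M _ _ N _ _ _ =>
    obtain ⟨e⟩ := nonempty_linearEquiv_residueField_of_isSimpleModule (R := R) (M := M ⧸ N)
    have : Finite (M ⧸ N) := .of_equiv _ e.symm.toEquiv
    have : Finite (M ⧸ N.toAddSubgroup) := this
    exact .of_addSubgroup_quotient N.toAddSubgroup

end FiniteLength

section RegularSequence

variable {R M : Type*} [CommRing R] [AddCommGroup M] [Module R M]

lemma isWeaklyRegular_of_flat [Module.Flat R M] {rs : List R} (h : IsWeaklyRegular R rs) :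
    IsWeaklyRegular M rs :=
  ((TensorProduct.rid R M).isWeaklyRegular_congr rs).mp h.isWeaklyRegular_lTensor

lemma isWeaklyRegular_pair_iff {x y : R} :
    IsWeaklyRegular M [x, y] ↔
      IsSMulRegular M x ∧ ∀ a b : M, x • a = y • b → ∃ c, b = x • c := by
  rw [isWeaklyRegular_cons_iff, isWeaklyRegular_singleton_iff]
  refine and_congr_right fun _ => ?_
  rw [isSMulRegular_quotient_iff_mem_of_smul_mem]
  simp only [Submodule.mem_smul_pointwise_iff_exists, Submodule.mem_top, true_and]
  exact ⟨fun h a b hab => (h b ⟨a, hab⟩).imp fun _ => Eq.symm,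
    fun h b ⟨a, hab⟩ => (h a b hab).imp fun _ => Eq.symm⟩

lemma isWeaklyRegular_pair_ker_iff {N : Type*} [AddCommGroup N] [Module R N] {x y : R}
    (hM : IsWeaklyRegular M [x, y]) {f : M →ₗ[R] N} (hf : Function.Surjective f) :
    IsWeaklyRegular f.ker [x, y] ↔ ∀ n : N, x • n = 0 → y • n = 0 → n = 0 := by
  obtain ⟨hx, hxy⟩ := isWeaklyRegular_pair_iff.mp hM
  rw [isWeaklyRegular_pair_iff]
  constructor
  · rintro ⟨-, hker⟩ n hxn hyn
    obtain ⟨v, rfl⟩ := hf n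
    rw [← map_smul] at hxn hyn
    obtain ⟨u, hu⟩ := hker ⟨y • v, hyn⟩ ⟨x • v, hxn⟩ (Subtype.ext (smul_comm x y v))
    have hvu : v = u := hx (congrArg Subtype.val hu)
    exact hvu ▸ u.2
  · refine fun hN => ⟨hx.submodule _ x, fun a b hab => ?_⟩
    obtain ⟨u, hu⟩ := hxy a b (congrArg Subtype.val hab)
    have ha : (a : M) = y • u := hx <| calc
      x • (a : M) = y • (b : M) := congrArg Subtype.val hab
      _ = x • y • u := by rw [hu, smul_comm]
    have hfu : f u = 0 := hN _ (by rw [← map_smul, ← hu]; exact b.2)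
      (by rw [← map_smul, ← ha]; exact a.2)
    exact ⟨⟨u, hfu⟩, Subtype.ext hu⟩

theorem free_of_isWeaklyRegular_of_maximalIdeal_eq [IsLocalRing R] [IsNoetherianRing R]
    [Module.Finite R M] {rs : List R} (hrs : maximalIdeal R = Ideal.ofList rs)
    (hM : IsWeaklyRegular M rs) : Module.Free R M := by
  induction hM using IsWeaklyRegular.recIterModByRegularWithRing
      generalizing ‹IsLocalRing R› ‹IsNoetherianRing R› ‹Module.Finite R M› with
  | nil R M =>
    have hR : IsField R := isField_iff_maximalIdeal_eq.mpr (hrs.trans Ideal.ofList_nil)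
    let := hR.toField
    exact .of_divisionRing R M
  | @cons R _ M _ _ r rs hreg _ ih =>
    have hr : r ∈ maximalIdeal R := hrs ▸ Ideal.subset_span List.mem_cons_self
    have : Nontrivial (R ⧸ Ideal.span {r}) :=
      Ideal.Quotient.nontrivial_iff.mpr (Ideal.span_singleton_ne_top hr)
    have : IsLocalRing (R ⧸ Ideal.span {r}) :=
      .of_surjective' _ Ideal.Quotient.mk_surjective
    have : Module.Finite (R ⧸ Ideal.span {r}) (QuotSMulTop r M) :=
      .of_restrictScalars_finite R _ _
    have : Module.FinitePresentation R M := Module.finitePresentation_of_finite R M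
    have hjac : r ∈ (⊥ : Ideal R).jacobson :=
      (jacobson_eq_maximalIdeal (⊥ : Ideal R) bot_ne_top).symm ▸ hr
    refine (Module.free_quotSMulTop_iff_free R M hjac hreg).mp (ih ?_)
    rw [← map_maximalIdeal_of_surjective _ Ideal.Quotient.mk_surjective, hrs, Ideal.ofList_cons,
      Ideal.map_sup, Ideal.map_quotient_self, bot_sup_eq, Ideal.map_ofList]

end RegularSequence

section Presentation

variable {R M V : Type*} [CommRing R] [AddCommGroup M] [Module R M] [AddCommGroup V] [Module R V]

lemma rank_eq_of_isSMulRegular_of_forall_smul_mem {K : Submodule R V}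
    {c : R} (hc : IsSMulRegular V c) (hK : ∀ v : V, c • v ∈ K) :
    Module.rank R K = Module.rank R V :=
  K.rank_le.antisymm <| LinearMap.rank_le_of_injective ((LinearMap.lsmul R V c).codRestrict K hK)
    fun _ _ h => hc (congrArg Subtype.val h)

lemma rank_ker_eq_of_isTorsion [Module.IsTorsionFree R V] [Module.Finite R M]
    (hM : Module.IsTorsion R M) (f : V →ₗ[R] M) :
    Module.rank R f.ker = Module.rank R V := by
  obtain ⟨c, hc, hreg⟩ := Submodule.annihilator_top_inter_nonZeroDivisors hM
  refine rank_eq_of_isSMulRegular_of_forall_smul_mem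
    (isRegular_iff_mem_nonZeroDivisors.mpr hreg).isSMulRegular fun v => ?_
  rw [LinearMap.mem_ker, map_smul]
  exact Submodule.mem_annihilator.mp hc _ Submodule.mem_top

lemma exists_injective_ker_eq_range [Nontrivial R] [Module.Finite R M]
    (hM : Module.IsTorsion R M) {n : ℕ} (f : (Fin n → R) →ₗ[R] M) [Module.Free R f.ker]
    [Module.Finite R f.ker] :
    ∃ φ : (Fin n → R) →ₗ[R] (Fin n → R), Function.Injective φ ∧ f.ker = φ.range := by
  have hrank : Module.finrank R f.ker = n := by
    rw [Module.finrank, rank_ker_eq_of_isTorsion hM, ← Module.finrank, Module.finrank_fin_fun]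
  let e := (Module.finBasisOfFinrankEq R _ hrank).equivFun.symm
  refine ⟨f.ker.subtype ∘ₗ e, Subtype.val_injective.comp e.injective, ?_⟩
  rw [LinearEquiv.range_comp, Submodule.range_subtype]

lemma exists_surjective_fin_succ [Module.Finite R M] :
    ∃ (n : ℕ) (π : (Fin (n + 1) → R) →ₗ[R] M), Function.Surjective π := by
  obtain ⟨n, π, hπ⟩ := Module.Finite.exists_fin' R M
  exact ⟨n, π ∘ₗ LinearMap.funLeft R R Fin.castSucc,
    hπ.comp (LinearMap.funLeft_surjective_of_injective _ _ _ (Fin.castSucc_injective n))⟩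

end Presentation

section RegularLocalRing

variable {R M : Type*} [CommRing R] [IsLocalRing R] [IsNoetherianRing R] [AddCommGroup M]
  [Module R M] {x y : R}

theorem free_ker_iff_forall_isFiniteLength_eq_bot (hxy : IsWeaklyRegular R [x, y])
    (hmax : maximalIdeal R = Ideal.span {x, y}) {V : Type*} [AddCommGroup V] [Module R V]
    [Module.Finite R V] [Module.Free R V] {π : V →ₗ[R] M} (hπ : Function.Surjective π) :
    Module.Free R π.ker ↔ ∀ N : Submodule R M, IsFiniteLength R N → N = ⊥ := by
  have hfree : Module.Free R π.ker ↔ IsWeaklyRegular π.ker [x, y] :=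
    ⟨fun _ => isWeaklyRegular_of_flat hxy,
      free_of_isWeaklyRegular_of_maximalIdeal_eq (by simp [hmax, Ideal.span_insert])⟩
  rw [hfree, isWeaklyRegular_pair_ker_iff (isWeaklyRegular_of_flat hxy) hπ,
    forall_isFiniteLength_eq_bot_iff, hmax]
  simp [Ideal.span_le, Set.insert_subset_iff]

theorem no_finite_submodule_iff_exists_exact_sequence_general (hxy : IsWeaklyRegular R [x, y])
    (hmax : maximalIdeal R = Ideal.span {x, y}) [Module.Finite R M] (hM : Module.IsTorsion R M) :
    (∀ N : Submodule R M, IsFiniteLength R N → N = ⊥) ↔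
      ∃ r : ℕ, 0 < r ∧ ∃ (φ : (Fin r → R) →ₗ[R] (Fin r → R)) (π : (Fin r → R) →ₗ[R] M),
        Function.Injective φ ∧ Function.Surjective π ∧ π.ker = φ.range := by
  constructor
  · intro h
    obtain ⟨n, π, hπ⟩ := exists_surjective_fin_succ (R := R) (M := M)
    have := (free_ker_iff_forall_isFiniteLength_eq_bot hxy hmax hπ).mpr h
    obtain ⟨φ, hφ, hker⟩ := exists_injective_ker_eq_range hM π
    exact ⟨n + 1, n.succ_pos, φ, π, hφ, hπ, hker⟩
  · rintro ⟨r, -, φ, π, hφ, hπ, hker⟩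
    have : Module.Free R π.ker := hker ▸ .of_equiv (.ofInjective φ hφ)
    exact (free_ker_iff_forall_isFiniteLength_eq_bot hxy hmax hπ).mp this

end RegularLocalRing

section PowerSeries

open PowerSeries

variable {A : Type*} [CommRing A]

lemma isWeaklyRegular_X_C {a : A} (ha : IsSMulRegular A a) :
    IsWeaklyRegular A⟦X⟧ [X, C a] := by
  refine isWeaklyRegular_pair_iff.mpr ⟨fun _ _ => X_mul_cancel, fun f g h => ?_⟩
  have h0 : a * constantCoeff g = 0 := by simpa using (congrArg constantCoeff h).symm
  exact X_dvd_iff.mpr (ha.right_eq_zero_of_smul h0)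

variable [IsLocalRing A]

lemma maximalIdeal_powerSeries_eq_span {a : A} (ha : maximalIdeal A = Ideal.span {a}) :
    maximalIdeal A⟦X⟧ = Ideal.span {X, C a} := by
  ext f
  rw [mem_maximalIdeal, mem_nonunits_iff, isUnit_iff_constantCoeff, ← mem_nonunits_iff,
    ← mem_maximalIdeal, ha, Ideal.mem_span_singleton, Ideal.mem_span_pair]
  constructor
  · rintro ⟨b, hb⟩
    obtain ⟨g, hg⟩ : X ∣ f - C (constantCoeff f) := by simp [X_dvd_iff]
    exact ⟨g, C b, by rw [← map_mul, mul_comm b, ← hb, mul_comm g, ← hg, sub_add_cancel]⟩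
  · rintro ⟨g, h, rfl⟩
    simp

instance isLocalHom_constantCoeff : IsLocalHom (constantCoeff (R := A)) :=
  ⟨fun _ => isUnit_iff_constantCoeff.mpr⟩

instance finite_residueField_powerSeries [Finite (ResidueField A)] :
    Finite (ResidueField A⟦X⟧) :=
  .of_injective _ (ResidueField.map (constantCoeff (R := A))).injective

end PowerSeries

instance finite_residueField_padicInt (p : ℕ) [Fact p.Prime] : Finite (ResidueField ℤ_[p]) :=
  .of_equiv _ PadicInt.residueField.symm.toEquiv

open PowerSeries in
/-- Let `Λ = ℤ_p[[T]]` and let `M` be a finitely generated torsion `Λ`-module. Then `M`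
has no nontrivial finite `Λ`-submodule if and only if there is an exact sequence
`0 → Λ^r → Λ^r → M → 0` for some positive integer `r`. -/
theorem no_finite_submodule_iff_exists_exact_sequence
    (p : ℕ) [Fact p.Prime] (M : Type*) [AddCommGroup M]
    [Module (PowerSeries ℤ_[p]) M] [Module.Finite (PowerSeries ℤ_[p]) M]
    (htor : ∀ m : M, ∃ c : PowerSeries ℤ_[p], c ≠ 0 ∧ c • m = 0) :
    (∀ N : Submodule (PowerSeries ℤ_[p]) M, Finite N → N = ⊥) ↔
      ∃ (r : ℕ), 0 < r ∧
        ∃ (φ : (Fin r → PowerSeries ℤ_[p]) →ₗ[PowerSeries ℤ_[p]]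
              (Fin r → PowerSeries ℤ_[p]))
          (π : (Fin r → PowerSeries ℤ_[p]) →ₗ[PowerSeries ℤ_[p]] M),
          Function.Injective φ ∧ Function.Surjective π ∧
            LinearMap.ker π = LinearMap.range φ := by
  have hM : Module.IsTorsion (PowerSeries ℤ_[p]) M := fun {m} =>
    let ⟨c, hc, hcm⟩ := htor m
    ⟨⟨c, mem_nonZeroDivisors_of_ne_zero hc⟩, hcm⟩
  simpa only [finite_iff_isFiniteLength (R := PowerSeries ℤ_[p])] using
    no_finite_submodule_iff_exists_exact_sequence_general
      (isWeaklyRegular_X_C (smul_right_injective _ PadicInt.prime_p.ne_zero))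
      (maximalIdeal_powerSeries_eq_span PadicInt.maximalIdeal_eq_span_p) hM
end
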